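/- Fix ν ≥ 2, positive integers s,t, and f_{i,j} ∈ L¹([-π,π]; ℂ^{s×t}) for i,j = 1,…,ν. Let A_n be the ν×ν block matrix with (i,j) block T_{n_i,n_j}(f_{i,j}), where n = n_1+⋯+n_ν and n_i/n → c_i ∈ (0,1) with c_1+⋯+c_ν = 1. Let Ã_n be obtained from A_n by replacing each off-diagonal block T_{n_i,n_j}(f_{i,j}) (i ≠ j) by T̃_{n_i,n_j}: if n_i ≥ n_j, T̃_{n_i,n_j} = [T_{n_j}(f_{i,j}); O_{s(n_i−n_j)×tn_j}] (square Toeplitz part on top, zero rows below); if n_j > n_i, T̃_{n_i,n_j} = [T_{n_i}(f_{i,j}) | O_{sn_i×t(n_j−n_i)}] (square Toeplitz part on the left, zero columns on the right). Then for any measurable G: {A_n}_n ∼_σ G if and only if {Ã_n}_n ∼_σ G; and if in addition all A_n and Ã_n are Hermitian, {A_n}_n ∼_λ G if and only if {Ã_n}_n ∼_λ G. -/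

import Mathlib

open MeasureTheory Filter Topology Matrix
open scoped Real

noncomputable section

/-- Sum of `F` over the eigenvalues (with multiplicity) of a square complex matrix,
the eigenvalues being the roots of the characteristic polynomial. -/
def eigSum {ι : Type*} [Fintype ι] [DecidableEq ι] (F : ℂ → ℂ) (A : Matrix ι ι ℂ) : ℂ :=
  (A.charpoly.roots.map F).sum

/-- Sum of `F` over the singular values `σ_1, …, σ_{min(#rows,#cols)}` of a rectangular
complex matrix: the singular values are the square roots of the eigenvalues of `A * Aᴴ`,
discarding the `#rows - min(#rows,#cols)` superfluous zero ones. -/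
def svSum {m n : Type*} [Fintype m] [Fintype n] [DecidableEq m]
    (F : ℝ → ℂ) (A : Matrix m n ℂ) : ℂ :=
  (∑ i, F (Real.sqrt ((Matrix.isHermitian_mul_conjTranspose_self A).eigenvalues i))) -
    ((Fintype.card m - min (Fintype.card m) (Fintype.card n) : ℕ) : ℂ) * F 0

/-- `{A_n}_n ∼_σ f` : the matrix-sequence `A` is distributed as the matrix-valued
symbol `f : Ω → ℂ^{ρ×τ}` in the sense of the singular values (Weyl sense). -/
def DistributedSV {Θ : Type*} [MeasureSpace Θ] (Ω : Set Θ)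
    {ρ τ : Type*} [Fintype ρ] [Fintype τ] [DecidableEq ρ]
    (f : Θ → Matrix ρ τ ℂ)
    {ι κ : ℕ → Type} [∀ n, Fintype (ι n)] [∀ n, Fintype (κ n)] [∀ n, DecidableEq (ι n)]
    (A : ∀ n, Matrix (ι n) (κ n) ℂ) : Prop :=
  ∀ F : ℝ → ℂ, Continuous F → HasCompactSupport F →
    Tendsto
      (fun n => ((min (Fintype.card (ι n)) (Fintype.card (κ n)) : ℕ) : ℂ)⁻¹ * svSum F (A n))
      atTop
      (𝓝 (((volume Ω).toReal : ℂ)⁻¹ *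
        ∫ θ in Ω, ((min (Fintype.card ρ) (Fintype.card τ) : ℕ) : ℂ)⁻¹ * svSum F (f θ)))

/-- `{A_n}_n ∼_λ f` : the matrix-sequence `A` is distributed as the matrix-valued
symbol `f : Ω → ℂ^{ρ×ρ}` in the sense of the eigenvalues (Weyl sense). -/
def DistributedEig {Θ : Type*} [MeasureSpace Θ] (Ω : Set Θ)
    {ρ : Type*} [Fintype ρ] [DecidableEq ρ]
    (f : Θ → Matrix ρ ρ ℂ)
    {ι : ℕ → Type} [∀ n, Fintype (ι n)] [∀ n, DecidableEq (ι n)]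
    (A : ∀ n, Matrix (ι n) (ι n) ℂ) : Prop :=
  ∀ F : ℂ → ℂ, Continuous F → HasCompactSupport F →
    Tendsto (fun n => ((Fintype.card (ι n) : ℕ) : ℂ)⁻¹ * eigSum F (A n)) atTop
      (𝓝 (((volume Ω).toReal : ℂ)⁻¹ *
        ∫ θ in Ω, ((Fintype.card ρ : ℕ) : ℂ)⁻¹ * eigSum F (f θ)))

/-- `{A_n}_n ∼_σ α I` (constant symbol `α I_s`, `α = 0` being the notion of a
zero-distributed matrix-sequence): the limit of the singular value averages is `F(α)`. -/
def DistributedSVConst (α : ℝ)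
    {ι κ : ℕ → Type} [∀ n, Fintype (ι n)] [∀ n, Fintype (κ n)] [∀ n, DecidableEq (ι n)]
    (A : ∀ n, Matrix (ι n) (κ n) ℂ) : Prop :=
  ∀ F : ℝ → ℂ, Continuous F → HasCompactSupport F →
    Tendsto
      (fun n => ((min (Fintype.card (ι n)) (Fintype.card (κ n)) : ℕ) : ℂ)⁻¹ * svSum F (A n))
      atTop (𝓝 (F α))

/-- `{A_n}_n ∼_λ α I` (constant symbol `α I_s`, `α` real): the limit of the eigenvalue
averages is `F(α)`. -/
def DistributedEigConst (α : ℝ)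
    {ι : ℕ → Type} [∀ n, Fintype (ι n)] [∀ n, DecidableEq (ι n)]
    (A : ∀ n, Matrix (ι n) (ι n) ℂ) : Prop :=
  ∀ F : ℂ → ℂ, Continuous F → HasCompactSupport F →
    Tendsto (fun n => ((Fintype.card (ι n) : ℕ) : ℂ)⁻¹ * eigSum F (A n)) atTop
      (𝓝 (F (α : ℂ)))

/-- The `k`-th Fourier coefficient (computed entrywise) of a matrix-valued function on
`[-π, π]`: `f̂_k = (1/2π) ∫_{-π}^{π} f(θ) e^{-ικθ} dθ`. -/
def fCoeff {ρ τ : Type*} (f : ℝ → Matrix ρ τ ℂ) (k : ℤ) : Matrix ρ τ ℂ :=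
  Matrix.of fun a b =>
    ((2 * π : ℝ) : ℂ)⁻¹ *
      ∫ θ in (-π : ℝ)..π, f θ a b * Complex.exp (-(Complex.I * (k : ℂ) * (θ : ℂ)))

/-- The (rectangular) block Toeplitz matrix `T_{n,n'}(f) = [f̂_{i-j}]`, of size
`sn × tn'` when `f` is `s × t` matrix-valued. -/
def blockToeplitz {ρ τ : Type*} (f : ℝ → Matrix ρ τ ℂ) (n n' : ℕ) :
    Matrix (Fin n × ρ) (Fin n' × τ) ℂ :=
  Matrix.of fun p q => fCoeff f (((p.1 : ℕ) : ℤ) - ((q.1 : ℕ) : ℤ)) p.2 q.2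

/-- The `ν × ν` block matrix with `(i,j)` block the rectangular block Toeplitz matrix
`T_{n_i,n_j}(f_{i,j})`; the row index `⟨i,(k,a)⟩` consists of the block row `i`, the
Toeplitz row `k` and the intra-block row `a`. -/
def blockMat (ν s t : ℕ) (f : Fin ν → Fin ν → ℝ → Matrix (Fin s) (Fin t) ℂ)
    (ns : Fin ν → ℕ) :
    Matrix ((i : Fin ν) × (Fin (ns i) × Fin s)) ((j : Fin ν) × (Fin (ns j) × Fin t)) ℂ :=
  Matrix.of fun P Q =>
    fCoeff (f P.1 Q.1) (((P.2.1 : ℕ) : ℤ) - ((Q.2.1 : ℕ) : ℤ)) P.2.2 Q.2.2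

/-- Recasting of the column index of a `ν × ν` block matrix along an equality `s = t`,
realizing it as a square matrix. -/
def sigCast (ν s t : ℕ) (ns : Fin ν → ℕ) (hst : s = t) :
    ((j : Fin ν) × (Fin (ns j) × Fin s)) → ((j : Fin ν) × (Fin (ns j) × Fin t)) :=
  fun Q => ⟨Q.1, (Q.2.1, Fin.cast hst Q.2.2)⟩

/-- The modified block matrix `Ã_n`: each block `T_{n_i,n_j}(f_{i,j})` is replaced by
its square leading Toeplitz part `T_{min(n_i,n_j)}(f_{i,j})` padded with zero rows
(if `n_i ≥ n_j`) or zero columns (if `n_j > n_i`); the diagonal blocks are unchanged. -/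
def blockMatTilde (ν s t : ℕ) (f : Fin ν → Fin ν → ℝ → Matrix (Fin s) (Fin t) ℂ)
    (ns : Fin ν → ℕ) :
    Matrix ((i : Fin ν) × (Fin (ns i) × Fin s)) ((j : Fin ν) × (Fin (ns j) × Fin t)) ℂ :=
  Matrix.of fun P Q =>
    if (P.2.1 : ℕ) < min (ns P.1) (ns Q.1) ∧ (Q.2.1 : ℕ) < min (ns P.1) (ns Q.1) then
      fCoeff (f P.1 Q.1) (((P.2.1 : ℕ) : ℤ) - ((Q.2.1 : ℕ) : ℤ)) P.2.2 Q.2.2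
    else 0

/-!
The point is that `A_n - Ã_n` has trace norm `o(n)`. Grouping entries by block and by position
inside the blocks of size `s × t` reduces this to the scalar Toeplitz matrix of an `L¹` symbol `g`
with its leading square block erased. Such a matrix is an average of rank-one matrices weighted by
`g`, up to two coordinate projections, so its trace norm is at most `2 √m √n ‖g‖₁`; this bound
allows one to approximate `g` in `L¹` by a trigonometric polynomial, and for the monomial of degree
`k` at most `2 |k| + 1` entries of the erased matrix are nonzero.

A perturbation of trace norm `o(n)` does not affect averages over the spectrum. For Hermitian
matrices the resolvent identity shows that the resolvents at `-i` differ by `o(n)` in trace norm,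
and by Stone-Weierstrass on the closed unit disc the same holds for every continuous function of
the resolvent, in particular for every continuous `F` vanishing at infinity. For singular values the
argument applies to `A Aᴴ`: there the difference of the resolvents is controlled by `A - B` because
both `(A Aᴴ + i)⁻¹ A` and `Bᴴ (B Bᴴ + i)⁻¹` are contractions.
-/

section TraceNorm

open scoped Matrix.Norms.L2Operator

variable {𝕜 m n p q : Type*} [RCLike 𝕜] [Fintype m] [Fintype n] [Fintype p] [Fintype q]
  [DecidableEq m]

/-- The trace pairing, identifying an `m × n` matrix `M` with the linear functional
`X ↦ tr (X M)` on `n × m` matrices with the `ℓ²` operator norm. -/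
def tracePairing : Matrix m n 𝕜 →ₗ[𝕜] StrongDual 𝕜 (Matrix n m 𝕜) :=
  LinearMap.toContinuousLinearMap.toLinearMap ∘ₗ
    LinearMap.mk₂ 𝕜 (fun M X => (X * M).trace)
      (by simp [Matrix.mul_add]) (by simp) (by simp [Matrix.add_mul]) (by simp)

/-- The trace norm (the sum of the singular values), encoded by duality: it is the norm of
`X ↦ tr (X M)` on matrices with the `ℓ²` operator norm. -/
def traceNorm : Seminorm 𝕜 (Matrix m n 𝕜) :=
  (normSeminorm 𝕜 (StrongDual 𝕜 (Matrix n m 𝕜))).comp tracePairing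

lemma norm_trace_mul_le (X : Matrix n m 𝕜) (M : Matrix m n 𝕜) :
    ‖(X * M).trace‖ ≤ traceNorm M * ‖X‖ :=
  (tracePairing M).le_opNorm X

lemma traceNorm_le {M : Matrix m n 𝕜} {c : ℝ} (hc : 0 ≤ c)
    (h : ∀ X : Matrix n m 𝕜, ‖(X * M).trace‖ ≤ c * ‖X‖) : traceNorm M ≤ c :=
  (tracePairing M).opNorm_le_bound hc h

lemma traceNorm_mul_le [DecidableEq p] (Y : Matrix p m 𝕜) (M : Matrix m n 𝕜) :
    traceNorm (Y * M) ≤ ‖Y‖ * traceNorm M := by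
  refine traceNorm_le (by positivity) fun X => ?_
  calc ‖(X * (Y * M)).trace‖ ≤ traceNorm M * ‖X * Y‖ := by
        rw [← Matrix.mul_assoc]; exact norm_trace_mul_le _ _
    _ ≤ traceNorm M * (‖X‖ * ‖Y‖) := by gcongr; exact l2_opNorm_mul X Y
    _ = ‖Y‖ * traceNorm M * ‖X‖ := by ring

lemma traceNorm_conjTranspose_le [DecidableEq n] (M : Matrix m n 𝕜) :
    traceNorm Mᴴ ≤ traceNorm M := by
  refine traceNorm_le (apply_nonneg _ _) fun X => ?_
  have h := norm_trace_mul_le Xᴴ M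
  rwa [l2_opNorm_conjTranspose, trace_mul_comm, ← norm_star, ← trace_conjTranspose,
    conjTranspose_mul, conjTranspose_conjTranspose] at h

lemma traceNorm_conjTranspose [DecidableEq n] (M : Matrix m n 𝕜) : traceNorm Mᴴ = traceNorm M :=
  (traceNorm_conjTranspose_le M).antisymm (by simpa using traceNorm_conjTranspose_le Mᴴ)

lemma traceNorm_mul_le' [DecidableEq p] (M : Matrix m n 𝕜) (Y : Matrix n p 𝕜) :
    traceNorm (M * Y) ≤ traceNorm M * ‖Y‖ := by
  classical
  rw [← traceNorm_conjTranspose, conjTranspose_mul, mul_comm, ← traceNorm_conjTranspose M,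
    ← l2_opNorm_conjTranspose]
  exact traceNorm_mul_le _ _

lemma traceNorm_mul_mul_le [DecidableEq p] [DecidableEq q] {X : Matrix p m 𝕜} (hX : ‖X‖ ≤ 1)
    (M : Matrix m n 𝕜) {Y : Matrix n q 𝕜} (hY : ‖Y‖ ≤ 1) :
    traceNorm (X * M * Y) ≤ traceNorm M :=
  calc traceNorm (X * M * Y) ≤ traceNorm (X * M) * ‖Y‖ := traceNorm_mul_le' _ _
    _ ≤ traceNorm (X * M) := mul_le_of_le_one_right (apply_nonneg _ _) hY
    _ ≤ ‖X‖ * traceNorm M := traceNorm_mul_le _ _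
    _ ≤ traceNorm M := mul_le_of_le_one_left (apply_nonneg _ _) hX

lemma l2_opNorm_one_le : ‖(1 : Matrix m m 𝕜)‖ ≤ 1 := by
  rw [← diagonal_one, l2_opNorm_diagonal]
  exact (pi_norm_le_iff_of_nonneg zero_le_one).2 fun i => norm_one.le

lemma norm_entry_le_l2_opNorm (X : Matrix n m 𝕜) (i : n) (j : m) : ‖X i j‖ ≤ ‖X‖ :=
  calc ‖X i j‖ = ‖WithLp.toLp 2 (X *ᵥ EuclideanSpace.single j 1) i‖ := by simp
    _ ≤ ‖WithLp.toLp 2 (X *ᵥ EuclideanSpace.single j 1)‖ := PiLp.norm_apply_le _ i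
    _ ≤ ‖X‖ * ‖EuclideanSpace.single j (1 : 𝕜)‖ := l2_opNorm_mulVec X _
    _ = ‖X‖ := by rw [PiLp.norm_single, norm_one, mul_one]

lemma norm_trace_le_traceNorm (M : Matrix m m 𝕜) : ‖M.trace‖ ≤ traceNorm M :=
  calc ‖M.trace‖ ≤ traceNorm M * ‖(1 : Matrix m m 𝕜)‖ := by simpa using norm_trace_mul_le 1 M
    _ ≤ traceNorm M := mul_le_of_le_one_right (apply_nonneg _ _) l2_opNorm_one_le

lemma traceNorm_le_sum_norm (M : Matrix m n 𝕜) : traceNorm M ≤ ∑ i, ∑ j, ‖M i j‖ := by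
  refine traceNorm_le (by positivity) fun X => ?_
  calc ‖(X * M).trace‖ = ‖∑ i, ∑ j, X j i * M i j‖ := by
        rw [Finset.sum_comm]; rfl
    _ ≤ ∑ i, ∑ j, ‖M i j‖ * ‖X‖ := by
        refine norm_sum_le_of_le _ fun i _ => norm_sum_le_of_le _ fun j _ => ?_
        rw [norm_mul, mul_comm]
        gcongr
        exact norm_entry_le_l2_opNorm X j i
    _ = (∑ i, ∑ j, ‖M i j‖) * ‖X‖ := by simp only [Finset.sum_mul]

lemma traceNorm_le_card_mul (M : Matrix m m 𝕜) : traceNorm M ≤ Fintype.card m * ‖M‖ := by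
  refine traceNorm_le (by positivity) fun X => ?_
  calc ‖(X * M).trace‖ ≤ ∑ _i : m, ‖X * M‖ :=
        norm_sum_le_of_le _ fun i _ => norm_entry_le_l2_opNorm (X * M) i i
    _ = Fintype.card m * ‖X * M‖ := by
        rw [Finset.sum_const, Finset.card_univ, nsmul_eq_mul]
    _ ≤ Fintype.card m * (‖X‖ * ‖M‖) := by gcongr; exact l2_opNorm_mul X M
    _ = Fintype.card m * ‖M‖ * ‖X‖ := by ring

lemma l2_opNorm_submatrix_one_le [DecidableEq p] {e : p → m} (he : Function.Injective e) :
    ‖(1 : Matrix m m 𝕜).submatrix id e‖ ≤ 1 := by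
  have h : ((1 : Matrix m m 𝕜).submatrix id e)ᴴ * (1 : Matrix m m 𝕜).submatrix id e = 1 := by
    rw [conjTranspose_submatrix, conjTranspose_one,
      ← submatrix_mul 1 1 e id e Function.bijective_id, Matrix.mul_one, submatrix_one e he]
  refine le_of_abs_le (abs_le_one_iff_mul_self_le_one.2 ?_)
  rw [← l2_opNorm_conjTranspose_mul_self, h]
  exact l2_opNorm_one_le

lemma l2_opNorm_submatrix_le [DecidableEq p] (X : Matrix n m 𝕜) {e : q → n} {e' : p → m}
    (he : Function.Injective e) (he' : Function.Injective e') : ‖X.submatrix e e'‖ ≤ ‖X‖ := by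
  classical
  have h : X.submatrix e e' =
      ((1 : Matrix n n 𝕜).submatrix id e)ᴴ * (X * (1 : Matrix m m 𝕜).submatrix id e') := by
    rw [conjTranspose_submatrix, conjTranspose_one, ← Equiv.coe_refl, ← Equiv.coe_refl,
      mul_submatrix_one, one_submatrix_mul]
    rfl
  have hJ : ‖((1 : Matrix n n 𝕜).submatrix id e)ᴴ‖ ≤ 1 := by
    rw [l2_opNorm_conjTranspose]; exact l2_opNorm_submatrix_one_le he
  rw [h]
  calc _ ≤ 1 * (‖X‖ * 1) := (l2_opNorm_mul _ _).trans <| mul_le_mul hJ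
        ((l2_opNorm_mul _ _).trans <| by gcongr; exact l2_opNorm_submatrix_one_le he')
        (norm_nonneg _) zero_le_one
    _ = ‖X‖ := by rw [one_mul, mul_one]

lemma traceNorm_le_sum_blocks {I J : Type*} [Fintype I] [Fintype J]
    {r : I → Type*} {c : J → Type*} [∀ i, Fintype (r i)] [∀ j, Fintype (c j)]
    [∀ i, DecidableEq (r i)] (e : (Σ i, r i) ≃ m) (e' : (Σ j, c j) ≃ n) (M : Matrix m n 𝕜) :
    traceNorm M ≤ ∑ i, ∑ j, traceNorm (M.submatrix (fun k => e ⟨i, k⟩) fun k => e' ⟨j, k⟩) := by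
  classical
  refine traceNorm_le (Finset.sum_nonneg fun i _ => Finset.sum_nonneg fun j _ => apply_nonneg _ _)
    fun X => ?_
  let rowBlock (i : I) (k : r i) : m := e ⟨i, k⟩
  let colBlock (j : J) (k : c j) : n := e' ⟨j, k⟩
  have hrow (i) : Function.Injective (rowBlock i) := e.injective.comp sigma_mk_injective
  have hcol (j) : Function.Injective (colBlock j) := e'.injective.comp sigma_mk_injective
  have htrace : (X * M).trace = ∑ i, ∑ j,
      (X.submatrix (colBlock j) (rowBlock i) * M.submatrix (rowBlock i) (colBlock j)).trace :=
    calc (X * M).trace = ∑ b, ∑ a, X b a * M a b := rfl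
      _ = ∑ j, ∑ y, ∑ i, ∑ x, X (e' ⟨j, y⟩) (e ⟨i, x⟩) * M (e ⟨i, x⟩) (e' ⟨j, y⟩) := by
          simp only [← e.sum_comp, ← e'.sum_comp, Fintype.sum_sigma]
      _ = ∑ i, ∑ j, ∑ y, ∑ x, X (e' ⟨j, y⟩) (e ⟨i, x⟩) * M (e ⟨i, x⟩) (e' ⟨j, y⟩) := by
          rw [Finset.sum_comm]
          exact Finset.sum_congr rfl fun j _ => Finset.sum_comm
  rw [htrace]
  simp only [Finset.sum_mul]
  refine norm_sum_le_of_le _ fun i _ => norm_sum_le_of_le _ fun j _ => ?_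
  refine (norm_trace_mul_le _ _).trans ?_
  exact mul_le_mul_of_nonneg_left (l2_opNorm_submatrix_le X (hcol j) (hrow i)) (apply_nonneg _ _)

end TraceNorm

section SeminormLimits

open Asymptotics

variable {α 𝕜 E : Type*} [RCLike 𝕜] [NormedAddCommGroup E] [NormedSpace 𝕜 E] {l : Filter α}
  {p : α → Seminorm 𝕜 E} {M N : α → ℝ}

lemma isClosed_setOf_seminorm_isLittleO (hM : M =O[l] N) (hp : ∀ n x, p n x ≤ M n * ‖x‖) :
    IsClosed {x | (fun n => p n x) =o[l] N} := by
  refine isClosed_of_closure_subset fun x hx => isLittleO_iff.2 fun ε hε => ?_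
  obtain ⟨C, hC, hMN⟩ := hM.exists_pos
  obtain ⟨y, hy, hxy⟩ := Metric.mem_closure_iff.1 hx (ε / (2 * C)) (by positivity)
  filter_upwards [isLittleO_iff.1 hy (half_pos hε), hMN.bound] with n hyn hMn
  have hdiff : p n (x - y) ≤ ε / 2 * ‖N n‖ :=
    calc p n (x - y) ≤ M n * ‖x - y‖ := hp n _
      _ ≤ C * ‖N n‖ * (ε / (2 * C)) := by
          rw [← dist_eq_norm]
          exact mul_le_mul ((le_abs_self _).trans hMn) hxy.le dist_nonneg (by positivity)
      _ = ε / 2 * ‖N n‖ := by field_simp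
  rw [Real.norm_of_nonneg (apply_nonneg _ _)] at hyn ⊢
  calc p n x = p n (y + (x - y)) := by rw [add_sub_cancel]
    _ ≤ p n y + p n (x - y) := map_add_le_add _ _ _
    _ ≤ ε * ‖N n‖ := by linarith

lemma isLittleO_seminorm_of_span_dense (hM : M =O[l] N) (hp : ∀ n x, p n x ≤ M n * ‖x‖)
    {S : Set E} (hS : (Submodule.span 𝕜 S).topologicalClosure = ⊤)
    (h : ∀ x ∈ S, (fun n => p n x) =o[l] N) (x : E) : (fun n => p n x) =o[l] N := by
  have hspan : (Submodule.span 𝕜 S : Set E) ⊆ {x | (fun n => p n x) =o[l] N} := fun y hy => by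
    induction hy using Submodule.span_induction with
    | mem y hy => exact h y hy
    | zero => simp
    | add y z _ _ hy hz =>
      refine IsBigO.trans_isLittleO (.of_norm_le fun n => ?_) (hy.add hz)
      rw [Real.norm_of_nonneg (apply_nonneg _ _)]
      exact map_add_le_add _ _ _
    | smul a y _ hy =>
      simpa only [Set.mem_ofPred_eq, map_smul_eq_mul] using hy.const_mul_left ‖a‖
  have hx : x ∈ closure (Submodule.span 𝕜 S : Set E) := by
    rw [← Submodule.topologicalClosure_coe, hS]; trivial
  exact (isClosed_setOf_seminorm_isLittleO hM hp).closure_subset_iff.2 hspan hx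

end SeminormLimits

section StoneWeierstrass

open Asymptotics
open scoped Matrix.Norms.L2Operator

variable {α : Type*} {ι : α → Type*} [∀ n, Fintype (ι n)] [∀ n, DecidableEq (ι n)] {l : Filter α}
  {N : α → ℝ} {K : Set ℂ} [CompactSpace K]

lemma isLittleO_traceNorm_starAlgHom_sub
    (φ ψ : ∀ n, C(K, ℂ) →⋆ₐ[ℂ] Matrix (ι n) (ι n) ℂ)
    (hcard : (fun n => (Fintype.card (ι n) : ℝ)) =O[l] N)
    (hid : (fun n => traceNorm (φ n (.restrict K (.id ℂ)) - ψ n (.restrict K (.id ℂ)))) =o[l] N)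
    (f : C(K, ℂ)) : (fun n => traceNorm (φ n f - ψ n f)) =o[l] N := by
  have norm_le (θ : ∀ n, C(K, ℂ) →⋆ₐ[ℂ] Matrix (ι n) (ι n) ℂ) (n) (f : C(K, ℂ)) :
      ‖θ n f‖ ≤ ‖f‖ := NonUnitalStarAlgHom.norm_apply_le (θ n) f
  induction f using ContinuousMap.induction_on_of_compact with
  | const r =>
    have hr (n) : φ n (.const K r) = ψ n (.const K r) :=
      ((φ n).toAlgHom.commutes r).trans ((ψ n).toAlgHom.commutes r).symm
    simpa only [hr, sub_self, map_zero] using isLittleO_zero _ _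
  | id => exact hid
  | star_id =>
    simp only [map_star, ← star_sub]
    simpa only [star_eq_conjTranspose, traceNorm_conjTranspose] using hid
  | add f g hf hg =>
    refine IsBigO.trans_isLittleO (.of_norm_le fun n => ?_) (hf.add hg)
    rw [Real.norm_of_nonneg (apply_nonneg _ _), map_add, map_add, add_sub_add_comm]
    exact map_add_le_add _ _ _
  | mul f g hf hg =>
    refine IsBigO.trans_isLittleO (.of_norm_le fun n => ?_)
      ((hg.const_mul_left ‖f‖).add (hf.const_mul_left ‖g‖))
    have hsplit : φ n (f * g) - ψ n (f * g) =
        φ n f * (φ n g - ψ n g) + (φ n f - ψ n f) * ψ n g := by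
      rw [map_mul, map_mul]; noncomm_ring
    rw [Real.norm_of_nonneg (apply_nonneg _ _), hsplit, mul_comm ‖g‖]
    refine (map_add_le_add _ _ _).trans (add_le_add ?_ ?_)
    · exact (traceNorm_mul_le _ _).trans (by gcongr; exact norm_le φ n f)
    · exact (traceNorm_mul_le' _ _).trans (by gcongr; exact norm_le ψ n g)
  | frequently f hf =>
    let p (n : α) : Seminorm ℂ C(K, ℂ) :=
      traceNorm.comp ((φ n).toAlgHom.toLinearMap - (ψ n).toAlgHom.toLinearMap)
    have hp (n) (g : C(K, ℂ)) : p n g ≤ 2 * Fintype.card (ι n) * ‖g‖ :=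
      calc p n g ≤ Fintype.card (ι n) * ‖φ n g - ψ n g‖ := traceNorm_le_card_mul _
        _ ≤ Fintype.card (ι n) * (‖g‖ + ‖g‖) := by
            gcongr
            exact (norm_sub_le _ _).trans (add_le_add (norm_le φ n g) (norm_le ψ n g))
        _ = 2 * Fintype.card (ι n) * ‖g‖ := by ring
    exact (isClosed_setOf_seminorm_isLittleO (hcard.const_mul_left 2) hp).closure_subset
      (mem_closure_iff_frequently.2 hf)

end StoneWeierstrass

section FunctionalCalculus

open scoped Matrix.Norms.L2Operator

variable {𝕜 m n : Type*} [RCLike 𝕜] [Fintype m] [Fintype n] [DecidableEq m]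

/-- The functional calculus `g ↦ g(M)` of a Hermitian matrix `M`, with values `g` in the scalar
field `𝕜` rather than in `ℝ`, and without any continuity requirement on `g`. -/
def functionalCalculus {M : Matrix m m 𝕜} (hM : M.IsHermitian) :
    (ℝ → 𝕜) →⋆ₐ[𝕜] Matrix m m 𝕜 where
  toFun g := Unitary.conjStarAlgAut 𝕜 _ hM.eigenvectorUnitary (diagonal (g ∘ hM.eigenvalues))
  map_one' := (congrArg _ diagonal_one).trans (map_one _)
  map_mul' g h := by
    rw [← map_mul, diagonal_mul_diagonal]; rfl
  map_zero' := (congrArg _ diagonal_zero).trans (map_zero _)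
  map_add' g h := by
    rw [← map_add, diagonal_add]; rfl
  commutes' r := (Unitary.conjStarAlgAut 𝕜 _ hM.eigenvectorUnitary).toAlgEquiv.commutes r
  map_star' g := by
    rw [← map_star, star_eq_conjTranspose, diagonal_conjTranspose]; rfl

variable {M : Matrix m m 𝕜} (hM : M.IsHermitian)

lemma functionalCalculus_ofReal : functionalCalculus hM RCLike.ofReal = M :=
  hM.spectral_theorem.symm

lemma trace_functionalCalculus (g : ℝ → 𝕜) :
    (functionalCalculus hM g).trace = ∑ i, g (hM.eigenvalues i) :=
  calc (functionalCalculus hM g).trace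
      = (star (hM.eigenvectorUnitary : Matrix m m 𝕜) * (hM.eigenvectorUnitary *
          diagonal (g ∘ hM.eigenvalues))).trace := trace_mul_comm _ _
    _ = ∑ i, g (hM.eigenvalues i) := by
        rw [← Matrix.mul_assoc, Unitary.coe_star_mul_self, Matrix.one_mul, trace_diagonal]; rfl

lemma l2_opNorm_functionalCalculus_le {g : ℝ → 𝕜} {c : ℝ} (hc : 0 ≤ c)
    (hg : ∀ i, ‖g (hM.eigenvalues i)‖ ≤ c) : ‖functionalCalculus hM g‖ ≤ c :=
  calc ‖functionalCalculus hM g‖ = ‖diagonal (g ∘ hM.eigenvalues)‖ :=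
        (CStarRing.norm_mul_coe_unitary _ (star hM.eigenvectorUnitary)).trans
          (CStarRing.norm_coe_unitary_mul _ _)
    _ ≤ c := by
        rw [l2_opNorm_diagonal]
        exact (pi_norm_le_iff_of_nonneg hc).2 hg

lemma l2_opNorm_functionalCalculus_mul_le [DecidableEq n] {A : Matrix m n 𝕜}
    (hA : (A * Aᴴ).IsHermitian) {g : ℝ → 𝕜} {c : ℝ} (hc : 0 ≤ c)
    (hg : ∀ x, ‖g x‖ ^ 2 * |x| ≤ c ^ 2) : ‖functionalCalculus hA g * A‖ ≤ c := by
  have hsq : functionalCalculus hA g * A * (functionalCalculus hA g * A)ᴴ =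
      functionalCalculus hA (g * RCLike.ofReal * star g) := by
    rw [map_mul, map_mul, map_star, functionalCalculus_ofReal, star_eq_conjTranspose,
      conjTranspose_mul]
    simp only [Matrix.mul_assoc]
  refine abs_le_of_sq_le_sq' ?_ hc |>.2
  rw [sq, ← l2_opNorm_conjTranspose, ← l2_opNorm_conjTranspose_mul_self,
    conjTranspose_conjTranspose, hsq]
  refine l2_opNorm_functionalCalculus_le hA (sq_nonneg c) fun i => ?_
  calc ‖g (hA.eigenvalues i) * (hA.eigenvalues i : 𝕜) * star (g (hA.eigenvalues i))‖
      = ‖g (hA.eigenvalues i)‖ ^ 2 * |hA.eigenvalues i| := by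
        rw [norm_mul, norm_mul, norm_star, RCLike.norm_ofReal]; ring
    _ ≤ c ^ 2 := hg _

lemma l2_opNorm_conjTranspose_mul_functionalCalculus_le {A : Matrix m n 𝕜}
    (hA : (A * Aᴴ).IsHermitian) {g : ℝ → 𝕜} {c : ℝ} (hc : 0 ≤ c)
    (hg : ∀ x, ‖g x‖ ^ 2 * |x| ≤ c ^ 2) : ‖Aᴴ * functionalCalculus hA g‖ ≤ c := by
  classical
  rw [← l2_opNorm_conjTranspose, conjTranspose_mul, conjTranspose_conjTranspose,
    ← star_eq_conjTranspose, ← map_star]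
  exact l2_opNorm_functionalCalculus_mul_le hA hc fun x => by simpa using hg x

end FunctionalCalculus

section Resolvent

open scoped Matrix.Norms.L2Operator

variable {m n : Type*} [Fintype m] [Fintype n] [DecidableEq m]

/-- The function `x ↦ 1 / (x + i)`, whose value at a Hermitian matrix is the resolvent at `-i`. -/
def resolventFun (x : ℝ) : ℂ := (x + Complex.I)⁻¹

lemma ofReal_add_I_ne_zero (x : ℝ) : (x + Complex.I : ℂ) ≠ 0 := fun h => by
  simpa using congrArg Complex.im h

lemma norm_resolventFun_sq (x : ℝ) : ‖resolventFun x‖ ^ 2 = (x ^ 2 + 1)⁻¹ := by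
  rw [resolventFun, norm_inv, inv_pow, Complex.sq_norm, Complex.normSq_apply]
  simp [sq]

lemma norm_resolventFun_le_one (x : ℝ) : ‖resolventFun x‖ ≤ 1 := by
  rw [← sq_le_one_iff₀ (norm_nonneg _), norm_resolventFun_sq]
  exact inv_le_one_of_one_le₀ (le_add_of_nonneg_left (sq_nonneg x))

lemma norm_resolventFun_sq_mul_abs_le_one (x : ℝ) : ‖resolventFun x‖ ^ 2 * |x| ≤ 1 ^ 2 := by
  rw [norm_resolventFun_sq, inv_mul_le_iff₀ (by positivity)]
  nlinarith [sq_abs x, sq_nonneg (|x| - 1), abs_nonneg x]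

/-- The resolvent `(M + i)⁻¹` of a Hermitian matrix. -/
def hermitianResolvent {M : Matrix m m ℂ} (hM : M.IsHermitian) : Matrix m m ℂ :=
  functionalCalculus hM resolventFun

variable {M M' : Matrix m m ℂ} (hM : M.IsHermitian) (hM' : M'.IsHermitian)

lemma l2_opNorm_hermitianResolvent_le_one : ‖hermitianResolvent hM‖ ≤ 1 :=
  l2_opNorm_functionalCalculus_le hM zero_le_one fun _ => norm_resolventFun_le_one _

lemma hermitianResolvent_mul_add_I :
    hermitianResolvent hM * (M + algebraMap ℂ (Matrix m m ℂ) Complex.I) = 1 := by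
  have hI : M + algebraMap ℂ (Matrix m m ℂ) Complex.I =
      functionalCalculus hM (RCLike.ofReal + algebraMap ℂ (ℝ → ℂ) Complex.I) := by
    rw [map_add, functionalCalculus_ofReal, AlgHomClass.commutes]
  rw [hI, hermitianResolvent, ← map_mul, ← map_one (functionalCalculus hM)]
  congr 1
  exact funext fun x => inv_mul_cancel₀ (ofReal_add_I_ne_zero x)

lemma hermitianResolvent_sub_hermitianResolvent :
    hermitianResolvent hM - hermitianResolvent hM' =
      hermitianResolvent hM * (M' - M) * hermitianResolvent hM' := by
  have hM'_inv := mul_eq_one_comm.1 (hermitianResolvent_mul_add_I hM')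
  rw [← add_sub_add_right_eq_sub M' M (algebraMap ℂ (Matrix m m ℂ) Complex.I), mul_sub, sub_mul,
    mul_assoc, hM'_inv, hermitianResolvent_mul_add_I, mul_one, one_mul]

lemma traceNorm_hermitianResolvent_sub_le :
    traceNorm (hermitianResolvent hM - hermitianResolvent hM') ≤ traceNorm (M - M') := by
  rw [hermitianResolvent_sub_hermitianResolvent, map_sub_rev traceNorm M M']
  exact traceNorm_mul_mul_le (l2_opNorm_hermitianResolvent_le_one hM) _
    (l2_opNorm_hermitianResolvent_le_one hM')

lemma traceNorm_hermitianResolvent_mul_conjTranspose_sub_le {A B : Matrix m n ℂ}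
    (hA : (A * Aᴴ).IsHermitian) (hB : (B * Bᴴ).IsHermitian) :
    traceNorm (hermitianResolvent hA - hermitianResolvent hB) ≤ 2 * traceNorm (A - B) := by
  classical
  have hA_le : ‖hermitianResolvent hA * A‖ ≤ 1 :=
    l2_opNorm_functionalCalculus_mul_le hA zero_le_one norm_resolventFun_sq_mul_abs_le_one
  have hB_le : ‖Bᴴ * hermitianResolvent hB‖ ≤ 1 :=
    l2_opNorm_conjTranspose_mul_functionalCalculus_le hB zero_le_one
      norm_resolventFun_sq_mul_abs_le_one
  have hsplit : hermitianResolvent hA - hermitianResolvent hB =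
      hermitianResolvent hA * (B - A) * (Bᴴ * hermitianResolvent hB) +
        hermitianResolvent hA * A * (B - A)ᴴ * hermitianResolvent hB := by
    have hdiff : B * Bᴴ - A * Aᴴ = (B - A) * Bᴴ + A * (B - A)ᴴ := by
      rw [conjTranspose_sub, Matrix.sub_mul, Matrix.mul_sub]; abel
    rw [hermitianResolvent_sub_hermitianResolvent, hdiff]
    simp only [Matrix.mul_add, Matrix.add_mul, Matrix.mul_assoc]
  calc traceNorm (hermitianResolvent hA - hermitianResolvent hB)
      ≤ traceNorm (B - A) + traceNorm (B - A)ᴴ := by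
        rw [hsplit]
        refine (map_add_le_add _ _ _).trans (add_le_add ?_ ?_)
        · exact traceNorm_mul_mul_le (l2_opNorm_hermitianResolvent_le_one hA) _ hB_le
        · exact traceNorm_mul_mul_le hA_le _ (l2_opNorm_hermitianResolvent_le_one hB)
    _ = 2 * traceNorm (A - B) := by
        rw [traceNorm_conjTranspose, map_sub_rev traceNorm B A, two_mul]

end Resolvent

section TestFunctions

open Asymptotics

lemma resolventFun_mem_closedBall (x : ℝ) :
    resolventFun x ∈ Metric.closedBall (0 : ℂ) 1 := by
  simpa using norm_resolventFun_le_one x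

/-- Pullback of functions on the closed unit disc along `x ↦ 1 / (x + i)`. -/
def resolventPullback : C(Metric.closedBall (0 : ℂ) 1, ℂ) →⋆ₐ[ℂ] (ℝ → ℂ) where
  toFun f x := f ⟨resolventFun x, resolventFun_mem_closedBall x⟩
  map_one' := rfl
  map_mul' _ _ := rfl
  map_zero' := rfl
  map_add' _ _ := rfl
  commutes' _ := rfl
  map_star' _ := rfl

lemma exists_resolventPullback_eq {F : ℂ → ℂ} (hF : Continuous F)
    (hF0 : Tendsto F (cocompact ℂ) (𝓝 0)) :
    ∃ f : C(Metric.closedBall (0 : ℂ) 1, ℂ), resolventPullback f = fun x : ℝ => F x := by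
  have hcont : Continuous (Function.update (fun w : ℂ => F (w⁻¹ - Complex.I)) 0 0) := by
    refine continuous_iff_continuousAt.2 fun w => ?_
    obtain rfl | hw := eq_or_ne w 0
    · rw [continuousAt_update_same]
      rw [← Metric.cobounded_eq_cocompact] at hF0
      exact hF0.comp ((tendsto_sub_const_cobounded Complex.I).comp tendsto_inv₀_nhdsNE_zero)
    · rw [continuousAt_update_of_ne hw]
      exact hF.continuousAt.comp ((continuousAt_inv₀ hw).sub continuousAt_const)
  refine ⟨⟨_, hcont.comp continuous_subtype_val⟩, funext fun x => ?_⟩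
  calc Function.update (fun w : ℂ => F (w⁻¹ - Complex.I)) 0 0 (resolventFun x)
      = F ((resolventFun x)⁻¹ - Complex.I) :=
        Function.update_of_ne (inv_ne_zero (ofReal_add_I_ne_zero x)) _ _
    _ = F x := by rw [resolventFun, inv_inv, add_sub_cancel_right]

variable {α : Type*} {ι κ : α → Type*} [∀ n, Fintype (ι n)] [∀ n, Fintype (κ n)]
  [∀ n, DecidableEq (ι n)] {l : Filter α} {N : α → ℝ}

lemma isLittleO_traceNorm_functionalCalculus_sub {M M' : ∀ n, Matrix (ι n) (ι n) ℂ}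
    (hM : ∀ n, (M n).IsHermitian) (hM' : ∀ n, (M' n).IsHermitian)
    (hcard : (fun n => (Fintype.card (ι n) : ℝ)) =O[l] N)
    (h : (fun n => traceNorm (hermitianResolvent (hM n) - hermitianResolvent (hM' n))) =o[l] N)
    {F : ℂ → ℂ} (hF : Continuous F) (hF0 : Tendsto F (cocompact ℂ) (𝓝 0)) :
    (fun n => traceNorm (functionalCalculus (hM n) (fun x => F x) -
      functionalCalculus (hM' n) fun x => F x)) =o[l] N := by
  obtain ⟨f, hf⟩ := exists_resolventPullback_eq hF hF0
  have : CompactSpace (Metric.closedBall (0 : ℂ) 1) :=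
    isCompact_iff_compactSpace.1 (isCompact_closedBall _ _)
  rw [← hf]
  exact isLittleO_traceNorm_starAlgHom_sub
    (fun n => (functionalCalculus (hM n)).comp resolventPullback)
    (fun n => (functionalCalculus (hM' n)).comp resolventPullback) hcard h f

lemma eigSum_eq_trace_functionalCalculus {m : Type*} [Fintype m] [DecidableEq m]
    {M : Matrix m m ℂ} (hM : M.IsHermitian) (F : ℂ → ℂ) :
    eigSum F M = (functionalCalculus hM fun x => F x).trace := by
  rw [eigSum, hM.roots_charpoly_eq_eigenvalues, Multiset.map_map, trace_functionalCalculus]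
  rfl

lemma isLittleO_eigSum_sub_of_hermitianResolvent {M M' : ∀ n, Matrix (ι n) (ι n) ℂ}
    (hM : ∀ n, (M n).IsHermitian) (hM' : ∀ n, (M' n).IsHermitian)
    (hcard : (fun n => (Fintype.card (ι n) : ℝ)) =O[l] N)
    (h : (fun n => traceNorm (hermitianResolvent (hM n) - hermitianResolvent (hM' n))) =o[l] N)
    {F : ℂ → ℂ} (hF : Continuous F) (hF0 : Tendsto F (cocompact ℂ) (𝓝 0)) :
    (fun n => eigSum F (M n) - eigSum F (M' n)) =o[l] N := by
  refine IsBigO.trans_isLittleO (.of_norm_le fun n => ?_)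
    (isLittleO_traceNorm_functionalCalculus_sub hM hM' hcard h hF hF0)
  rw [eigSum_eq_trace_functionalCalculus (hM n), eigSum_eq_trace_functionalCalculus (hM' n),
    ← trace_sub]
  exact norm_trace_le_traceNorm _

theorem isLittleO_eigSum_sub {M M' : ∀ n, Matrix (ι n) (ι n) ℂ}
    (hM : ∀ n, (M n).IsHermitian) (hM' : ∀ n, (M' n).IsHermitian)
    (hcard : (fun n => (Fintype.card (ι n) : ℝ)) =O[l] N)
    (h : (fun n => traceNorm (M n - M' n)) =o[l] N)
    {F : ℂ → ℂ} (hF : Continuous F) (hF0 : Tendsto F (cocompact ℂ) (𝓝 0)) :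
    (fun n => eigSum F (M n) - eigSum F (M' n)) =o[l] N := by
  refine isLittleO_eigSum_sub_of_hermitianResolvent hM hM' hcard
    (IsBigO.trans_isLittleO (.of_norm_le fun n => ?_) h) hF hF0
  rw [Real.norm_of_nonneg (apply_nonneg _ _)]
  exact traceNorm_hermitianResolvent_sub_le (hM n) (hM' n)

lemma svSum_sub_svSum {m n : Type*} [Fintype m] [Fintype n] [DecidableEq m] (F : ℝ → ℂ)
    (A B : Matrix m n ℂ) :
    svSum F A - svSum F B =
      eigSum (fun z => F √‖z‖) (A * Aᴴ) - eigSum (fun z => F √‖z‖) (B * Bᴴ) := by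
  have hsum (C : Matrix m n ℂ) : eigSum (fun z => F √‖z‖) (C * Cᴴ) =
      ∑ i, F √((isHermitian_mul_conjTranspose_self C).eigenvalues i) := by
    rw [eigSum_eq_trace_functionalCalculus (isHermitian_mul_conjTranspose_self C),
      trace_functionalCalculus]
    refine Finset.sum_congr rfl fun i _ => ?_
    open scoped ComplexOrder in
    rw [Complex.norm_of_nonneg ((posSemidef_self_mul_conjTranspose C).eigenvalues_nonneg i)]
  rw [hsum, hsum, svSum, svSum, sub_sub_sub_cancel_right]

theorem isLittleO_svSum_sub {A B : ∀ n, Matrix (ι n) (κ n) ℂ}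
    (hcard : (fun n => (Fintype.card (ι n) : ℝ)) =O[l] N)
    (h : (fun n => traceNorm (A n - B n)) =o[l] N)
    {F : ℝ → ℂ} (hF : Continuous F) (hF0 : Tendsto F (cocompact ℝ) (𝓝 0)) :
    (fun n => svSum F (A n) - svSum F (B n)) =o[l] N := by
  simp only [svSum_sub_svSum]
  have hsqrt : Tendsto (fun z : ℂ => √‖z‖) (cocompact ℂ) (cocompact ℝ) :=
    (Real.tendsto_sqrt_atTop.comp tendsto_norm_cocompact_atTop).mono_right atTop_le_cocompact
  refine isLittleO_eigSum_sub_of_hermitianResolvent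
    (fun n => isHermitian_mul_conjTranspose_self (A n))
    (fun n => isHermitian_mul_conjTranspose_self (B n)) hcard
    (IsBigO.trans_isLittleO (.of_norm_le fun n => ?_) (h.const_mul_left 2))
    (by fun_prop) (hF0.comp hsqrt)
  rw [Real.norm_of_nonneg (apply_nonneg _ _)]
  exact traceNorm_hermitianResolvent_mul_conjTranspose_sub_le _ _

end TestFunctions

section Averages

open Asymptotics

variable {α : Type*} {ι κ : α → Type*} [∀ n, Fintype (ι n)] [∀ n, Fintype (κ n)]
  [∀ n, DecidableEq (ι n)] {l : Filter α}

/-- The average of `F` over the `min(#rows, #cols)` singular values of a matrix. -/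
def svAverage {m n : Type*} [Fintype m] [Fintype n] [DecidableEq m] (F : ℝ → ℂ)
    (A : Matrix m n ℂ) : ℂ :=
  ((min (Fintype.card m) (Fintype.card n) : ℕ) : ℂ)⁻¹ * svSum F A

/-- The average of `F` over the eigenvalues of a square matrix. -/
def eigAverage {m : Type*} [Fintype m] [DecidableEq m] (F : ℂ → ℂ) (A : Matrix m m ℂ) : ℂ :=
  ((Fintype.card m : ℕ) : ℂ)⁻¹ * eigSum F A

lemma tendsto_inv_mul_sub_of_isLittleO {u v : α → ℂ} {d : α → ℕ}
    (h : (fun n => u n - v n) =o[l] fun n => (d n : ℝ)) :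
    Tendsto (fun n => (d n : ℂ)⁻¹ * u n - (d n : ℂ)⁻¹ * v n) l (𝓝 0) := by
  have hd : (fun n => (d n : ℝ)) =O[l] fun n => (d n : ℂ) :=
    isBigO_of_le l fun n => by simp
  refine (h.trans_isBigO hd).tendsto_div_nhds_zero.congr fun n => ?_
  rw [div_eq_inv_mul, mul_sub]

lemma tendsto_svAverage_sub {A B : ∀ n, Matrix (ι n) (κ n) ℂ}
    (hcard : (fun n => (Fintype.card (ι n) : ℝ)) =O[l]
      fun n => ((min (Fintype.card (ι n)) (Fintype.card (κ n)) : ℕ) : ℝ))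
    (h : (fun n => traceNorm (A n - B n)) =o[l]
      fun n => ((min (Fintype.card (ι n)) (Fintype.card (κ n)) : ℕ) : ℝ))
    {F : ℝ → ℂ} (hF : Continuous F) (hF0 : Tendsto F (cocompact ℝ) (𝓝 0)) :
    Tendsto (fun n => svAverage F (A n) - svAverage F (B n)) l (𝓝 0) :=
  tendsto_inv_mul_sub_of_isLittleO (isLittleO_svSum_sub hcard h hF hF0)

lemma tendsto_eigAverage_sub {M M' : ∀ n, Matrix (ι n) (ι n) ℂ}
    (hM : ∀ n, (M n).IsHermitian) (hM' : ∀ n, (M' n).IsHermitian)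
    (h : (fun n => traceNorm (M n - M' n)) =o[l] fun n => (Fintype.card (ι n) : ℝ))
    {F : ℂ → ℂ} (hF : Continuous F) (hF0 : Tendsto F (cocompact ℂ) (𝓝 0)) :
    Tendsto (fun n => eigAverage F (M n) - eigAverage F (M' n)) l (𝓝 0) :=
  tendsto_inv_mul_sub_of_isLittleO (isLittleO_eigSum_sub hM hM' (isBigO_refl _ _) h hF hF0)

end Averages

section Distribution

variable {Θ ρ τ : Type*} [MeasureSpace Θ] [Fintype ρ] [Fintype τ] [DecidableEq ρ] {Ω : Set Θ}
  {ι κ : ℕ → Type} [∀ n, Fintype (ι n)] [∀ n, Fintype (κ n)] [∀ n, DecidableEq (ι n)]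

lemma tendsto_iff_of_sub_tendsto_zero {α E : Type*} [SeminormedAddCommGroup E] {l : Filter α}
    {a b : α → E} (h : Tendsto (fun n => a n - b n) l (𝓝 0)) {L : E} :
    Tendsto a l (𝓝 L) ↔ Tendsto b l (𝓝 L) :=
  tendsto_iff_of_dist (by simpa only [dist_eq_norm] using tendsto_zero_iff_norm_tendsto_zero.1 h)

lemma distributedSV_congr {G : Θ → Matrix ρ τ ℂ} {A B : ∀ n, Matrix (ι n) (κ n) ℂ}
    (h : ∀ F : ℝ → ℂ, Continuous F → Tendsto F (cocompact ℝ) (𝓝 0) →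
      Tendsto (fun n => svAverage F (A n) - svAverage F (B n)) atTop (𝓝 0)) :
    DistributedSV Ω G A ↔ DistributedSV Ω G B :=
  forall₃_congr fun F hF hFs => tendsto_iff_of_sub_tendsto_zero (h F hF hFs.is_zero_at_infty)

lemma distributedEig_congr {G : Θ → Matrix ρ ρ ℂ} {A B : ∀ n, Matrix (ι n) (ι n) ℂ}
    (h : ∀ F : ℂ → ℂ, Continuous F → Tendsto F (cocompact ℂ) (𝓝 0) →
      Tendsto (fun n => eigAverage F (A n) - eigAverage F (B n)) atTop (𝓝 0)) :
    DistributedEig Ω G A ↔ DistributedEig Ω G B :=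
  forall₃_congr fun F hF hFs => tendsto_iff_of_sub_tendsto_zero (h F hF hFs.is_zero_at_infty)

end Distribution

section Toeplitz

open AddCircle Asymptotics
open scoped Matrix.Norms.L2Operator

section Algebra

variable {R : Type*} [Ring R] (m n : ℕ)

/-- The `m × n` Toeplitz matrix `[c (p - q)]` of a two-sided sequence `c`. -/
def toeplitz : (ℤ → R) →ₗ[R] Matrix (Fin m) (Fin n) R where
  toFun c := Matrix.of fun p q => c ((p : ℤ) - (q : ℤ))
  map_add' _ _ := rfl
  map_smul' _ _ := rfl

@[simp]
lemma toeplitz_apply (c : ℤ → R) (p : Fin m) (q : Fin n) :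
    toeplitz m n c p q = c ((p : ℤ) - (q : ℤ)) := rfl

/-- What remains of the `m × n` Toeplitz matrix of `c` once its leading square block of size
`min m n` is erased. -/
def toeplitzDefect : (ℤ → R) →ₗ[R] Matrix (Fin m) (Fin n) R where
  toFun c := Matrix.of fun p q =>
    if (p : ℕ) < min m n ∧ (q : ℕ) < min m n then 0 else c ((p : ℤ) - (q : ℤ))
  map_add' c d := by
    ext p q
    simp only [of_apply, Matrix.add_apply, Pi.add_apply]
    split_ifs <;> simp only [add_zero]
  map_smul' r c := by
    ext p q
    simp only [of_apply, Matrix.smul_apply, Pi.smul_apply, RingHom.id_apply]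
    split_ifs <;> simp only [smul_zero]

@[simp]
lemma toeplitzDefect_apply (c : ℤ → R) (p : Fin m) (q : Fin n) :
    toeplitzDefect m n c p q =
      if (p : ℕ) < min m n ∧ (q : ℕ) < min m n then 0 else c ((p : ℤ) - (q : ℤ)) := rfl

/-- The coordinate projection of `R ^ k` onto its first `r` coordinates. -/
def leadingProjection (R : Type*) [Ring R] (r k : ℕ) : Matrix (Fin k) (Fin k) R :=
  diagonal fun p => if (p : ℕ) < r then 1 else 0

lemma toeplitzDefect_eq_sub (c : ℤ → R) :
    toeplitzDefect m n c = toeplitz m n c -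
      leadingProjection R (min m n) m * toeplitz m n c * leadingProjection R (min m n) n := by
  ext p q
  by_cases hp : (p : ℕ) < min m n <;> by_cases hq : (q : ℕ) < min m n <;>
    simp [-lt_inf_iff, leadingProjection, mul_diagonal, diagonal_mul, hp, hq]

end Algebra

section TraceNormEstimates

variable {𝕜 : Type*} [RCLike 𝕜]

lemma l2_opNorm_leadingProjection_le (r k : ℕ) : ‖leadingProjection 𝕜 r k‖ ≤ 1 := by
  rw [leadingProjection, l2_opNorm_diagonal, pi_norm_le_iff_of_nonneg zero_le_one]
  intro p
  split_ifs <;> simp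

lemma traceNorm_toeplitzDefect_le (m n : ℕ) (c : ℤ → 𝕜) :
    traceNorm (toeplitzDefect m n c) ≤ 2 * traceNorm (toeplitz m n c) := by
  rw [toeplitzDefect_eq_sub, two_mul]
  refine (map_sub_le_add _ _ _).trans (add_le_add_right ?_ _)
  exact traceNorm_mul_mul_le (l2_opNorm_leadingProjection_le _ _) _
    (l2_opNorm_leadingProjection_le _ _)

lemma traceNorm_vecMulVec_le {m n : Type*} [Fintype m] [Fintype n] [DecidableEq m]
    (u : m → 𝕜) (w : n → 𝕜) :
    traceNorm (vecMulVec u w) ≤ ‖WithLp.toLp 2 u‖ * ‖WithLp.toLp 2 w‖ := by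
  refine traceNorm_le (by positivity) fun X => ?_
  have hinner : (X * vecMulVec u w).trace =
      inner 𝕜 (WithLp.toLp 2 (star w)) (WithLp.toLp 2 (X *ᵥ u)) := by
    rw [mul_vecMulVec, trace_vecMulVec, EuclideanSpace.inner_eq_star_dotProduct]
    simp
  have hstar : ‖WithLp.toLp 2 (star w)‖ = ‖WithLp.toLp 2 w‖ := by
    simp [EuclideanSpace.norm_eq]
  calc ‖(X * vecMulVec u w).trace‖ ≤ ‖WithLp.toLp 2 w‖ * ‖WithLp.toLp 2 (X *ᵥ u)‖ := by
        rw [hinner, ← hstar]; exact norm_inner_le_norm _ _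
    _ ≤ ‖WithLp.toLp 2 w‖ * (‖X‖ * ‖WithLp.toLp 2 u‖) := by
        gcongr; exact l2_opNorm_mulVec X (WithLp.toLp 2 u)
    _ = ‖WithLp.toLp 2 u‖ * ‖WithLp.toLp 2 w‖ * ‖X‖ := by ring

end TraceNormEstimates

variable {T : ℝ}

/-- The vector `(1, e_1(x), …, e_{m-1}(x))` of the first Fourier monomials at `x`. -/
def fourierVec (m : ℕ) (x : AddCircle T) : Fin m → ℂ := fun p => fourier (p : ℤ) x

lemma norm_fourier_apply (k : ℤ) (x : AddCircle T) : ‖fourier k x‖ = 1 := by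
  rw [fourier_apply]; exact Circle.norm_coe _

lemma norm_toLp_fourierVec (m : ℕ) (x : AddCircle T) :
    ‖WithLp.toLp 2 (fourierVec m x)‖ = √m := by
  simp [-fourier_apply, EuclideanSpace.norm_eq, fourierVec, norm_fourier_apply]

lemma norm_toLp_star_fourierVec (m : ℕ) (x : AddCircle T) :
    ‖WithLp.toLp 2 (star (fourierVec m x))‖ = √m := by
  simp [-fourier_apply, EuclideanSpace.norm_eq, fourierVec, norm_fourier_apply]

variable [Fact (0 < T)]

lemma trace_mul_toeplitz_fourierCoeff {m n : ℕ} (X : Matrix (Fin n) (Fin m) ℂ)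
    {g : AddCircle T → ℂ} (hg : Integrable g haarAddCircle) :
    (X * toeplitz m n (fourierCoeff g)).trace =
      ∫ x, (X * vecMulVec (star (fourierVec m x)) (fourierVec n x)).trace * g x
        ∂haarAddCircle := by
  have hentry (q : Fin n) (p : Fin m) : X q p * fourierCoeff g ((p : ℤ) - (q : ℤ)) =
      ∫ x, X q p * (star (fourierVec m x p) * fourierVec n x q) * g x ∂haarAddCircle := by
    rw [fourierCoeff, ← integral_const_mul]
    refine integral_congr_ae (.of_forall fun x => ?_)
    simp only [fourierVec, neg_sub, sub_eq_neg_add (q : ℤ), fourier_add, fourier_neg, smul_eq_mul,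
      Complex.star_def, mul_assoc]
  have hint (q : Fin n) (p : Fin m) : Integrable
      (fun x => X q p * (star (fourierVec m x p) * fourierVec n x q) * g x) haarAddCircle := by
    refine (hg.bdd_mul (c := 1) ?_ (.of_forall fun x => ?_)).const_mul (X q p) |>.congr
      (.of_forall fun x => (mul_assoc _ _ _).symm)
    · unfold fourierVec; fun_prop
    · simp [-fourier_apply, fourierVec, norm_fourier_apply]
  calc (X * toeplitz m n (fourierCoeff g)).trace
      = ∑ q, ∑ p, X q p * fourierCoeff g ((p : ℤ) - (q : ℤ)) := rfl
    _ = ∫ x, ∑ q, ∑ p, X q p * (star (fourierVec m x p) * fourierVec n x q) * g x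
          ∂haarAddCircle := by
        rw [integral_finsetSum _ fun q _ => integrable_finsetSum _ fun p _ => hint q p]
        refine Finset.sum_congr rfl fun q _ => ?_
        rw [integral_finsetSum _ fun p _ => hint q p]
        exact Finset.sum_congr rfl fun p _ => hentry q p
    _ = _ := by simp only [← Finset.sum_mul]; rfl

lemma traceNorm_toeplitz_fourierCoeff_le (m n : ℕ) {g : AddCircle T → ℂ}
    (hg : Integrable g haarAddCircle) :
    traceNorm (toeplitz m n (fourierCoeff g)) ≤ √m * √n * ∫ x, ‖g x‖ ∂haarAddCircle := by
  refine traceNorm_le (by positivity) fun X => ?_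
  rw [trace_mul_toeplitz_fourierCoeff X hg]
  calc _ ≤ ∫ x, √m * √n * ‖X‖ * ‖g x‖ ∂haarAddCircle := by
        refine norm_integral_le_of_norm_le (hg.norm.const_mul _) (.of_forall fun x => ?_)
        rw [norm_mul]
        gcongr
        refine (norm_trace_mul_le _ _).trans ?_
        gcongr
        refine (traceNorm_vecMulVec_le _ _).trans_eq ?_
        rw [norm_toLp_star_fourierVec, norm_toLp_fourierVec]
    _ = √m * √n * (∫ x, ‖g x‖ ∂haarAddCircle) * ‖X‖ := by
        rw [integral_const_mul]; ring

/-- The sequence of Fourier coefficients as a linear map on `L¹` of the circle. -/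
def fourierCoeffL1 : Lp ℂ 1 (haarAddCircle (T := T)) →ₗ[ℂ] ℤ → ℂ where
  toFun φ := fourierCoeff φ
  map_add' φ ψ := by
    rw [fourierCoeff_congr_ae (Lp.coeFn_add φ ψ)]
    exact fourierCoeff.add (L1.integrable_coeFn φ) (L1.integrable_coeFn ψ)
  map_smul' r φ := by
    rw [fourierCoeff_congr_ae (Lp.coeFn_smul r φ)]
    exact funext fun n => fourierCoeff.const_smul _ _ _

lemma traceNorm_toeplitzDefect_fourierCoeffL1_le (m n : ℕ)
    (φ : Lp ℂ 1 (haarAddCircle (T := T))) :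
    traceNorm (toeplitzDefect m n (fourierCoeffL1 φ)) ≤ (m + n) * ‖φ‖ :=
  calc _ ≤ 2 * (√m * √n * ‖φ‖) := by
        refine (traceNorm_toeplitzDefect_le m n _).trans ?_
        rw [L1.norm_eq_integral_norm]
        gcongr
        exact traceNorm_toeplitz_fourierCoeff_le m n (L1.integrable_coeFn φ)
    _ = 2 * √m * √n * ‖φ‖ := by ring
    _ ≤ (√m ^ 2 + √n ^ 2) * ‖φ‖ := by gcongr; exact two_mul_le_add_sq _ _
    _ = (m + n) * ‖φ‖ := by rw [Real.sq_sqrt m.cast_nonneg, Real.sq_sqrt n.cast_nonneg]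

/-- The nonzero entries lie on the `k`-th diagonal, in rows `p` with `|p - min m n| ≤ |k|`. -/
lemma traceNorm_toeplitzDefect_single_le (m n : ℕ) (k : ℤ) :
    traceNorm (toeplitzDefect m n (Pi.single k (1 : ℂ))) ≤ ((2 * |k| + 1 : ℤ) : ℝ) := by
  let r := min m n
  let S : Finset (Fin m × Fin n) :=
    {x | ¬((x.1 : ℕ) < r ∧ (x.2 : ℕ) < r) ∧ (x.1 : ℤ) - (x.2 : ℤ) = k}
  have hcard : S.card ≤ (Finset.Icc (-|k|) |k|).card := by
    refine Finset.card_le_card_of_injOn (fun x => (x.1 : ℤ) - (r : ℤ)) ?_ ?_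
    · rintro ⟨p, q⟩ hx
      simp only [S, r, Finset.coe_filter, Set.mem_ofPred_eq, Finset.mem_univ, true_and] at hx
      simp only [Finset.coe_Icc, Set.mem_Icc]
      grind
    · rintro ⟨p, q⟩ hx ⟨p', q'⟩ hx' h
      simp only [S, Finset.coe_filter, Set.mem_ofPred_eq, Finset.mem_univ, true_and] at hx hx' h
      grind
  have hentry (p : Fin m) (q : Fin n) : ‖toeplitzDefect m n (Pi.single k (1 : ℂ)) p q‖ =
      if (p, q) ∈ S then 1 else 0 := by
    rw [toeplitzDefect_apply, Pi.single_apply]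
    grind [norm_zero, norm_one]
  calc traceNorm (toeplitzDefect m n (Pi.single k (1 : ℂ)))
      ≤ ∑ p, ∑ q, ‖toeplitzDefect m n (Pi.single k (1 : ℂ)) p q‖ := traceNorm_le_sum_norm _
    _ = S.card := by
        simp only [hentry]
        rw [← Fintype.sum_prod_type', Finset.sum_boole, Finset.filter_univ_mem]
    _ ≤ ((Finset.Icc (-|k|) |k|).card : ℤ) := by exact_mod_cast hcard
    _ = ((2 * |k| + 1 : ℤ) : ℝ) := by
        rw [Int.card_Icc, Int.toNat_of_nonneg (by grind)]; push_cast; ring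

lemma isLittleO_traceNorm_toeplitzDefect {α : Type*} {l : Filter α} {N : α → ℝ} {m n : α → ℕ}
    (hN : Tendsto N l atTop) (hm : (fun k => (m k : ℝ)) =O[l] N) (hn : (fun k => (n k : ℝ)) =O[l] N)
    (φ : Lp ℂ 1 (haarAddCircle (T := T))) :
    (fun k => traceNorm (toeplitzDefect (m k) (n k) (fourierCoeffL1 φ))) =o[l] N := by
  let p (k : α) : Seminorm ℂ (Lp ℂ 1 (haarAddCircle (T := T))) :=
    traceNorm.comp (toeplitzDefect (m k) (n k) ∘ₗ fourierCoeffL1)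
  refine isLittleO_seminorm_of_span_dense (p := p) (hm.add hn)
    (fun k φ => traceNorm_toeplitzDefect_fourierCoeffL1_le (m k) (n k) φ)
    (span_fourierLp_closure_eq_top ENNReal.one_ne_top) ?_ φ
  rintro _ ⟨k, rfl⟩
  have hcoeff : fourierCoeffL1 (fourierLp (T := T) 1 k) = Pi.single k 1 :=
    (fourierCoeff_congr_ae (coeFn_fourierLp 1 k)).trans (fourierCoeff_fourier k)
  have hconst : (fun _ : α => ((2 * |k| + 1 : ℤ) : ℝ)) =o[l] N :=
    isLittleO_const_left.2 (.inr (tendsto_norm_atTop_atTop.comp hN))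
  refine IsBigO.trans_isLittleO (.of_norm_le fun a => ?_) hconst
  rw [Real.norm_of_nonneg (apply_nonneg _ _)]
  change traceNorm (toeplitzDefect _ _ (fourierCoeffL1 (fourierLp 1 k))) ≤ _
  rw [hcoeff]
  exact traceNorm_toeplitzDefect_single_le _ _ k

end Toeplitz

section BlockMatrices

open AddCircle Asymptotics

local instance fact_zero_lt_two_pi : Fact (0 < 2 * π) := ⟨Real.two_pi_pos⟩

lemma exists_fourierCoeffL1_eq_fCoeff {ρ τ : Type*} {f : ℝ → Matrix ρ τ ℂ} {a : ρ} {b : τ}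
    (hf : IntervalIntegrable (fun θ => f θ a b) volume (-π) π) :
    ∃ φ : Lp ℂ 1 (haarAddCircle (T := 2 * π)), fourierCoeffL1 φ = fun k => fCoeff f k a b := by
  have hend : -π + 2 * π = π := by ring
  have hlength : π - -π = 2 * π := by ring
  have hL1 : MemLp (liftIoc (2 * π) (-π) fun θ => f θ a b) 1 haarAddCircle := by
    rw [memLp_haarAddCircle_iff]
    refine MemLp.memLp_liftIoc ?_
    rwa [hend, memLp_one_iff_integrable, ← IntegrableOn,
      ← intervalIntegrable_iff_integrableOn_Ioc_of_le (neg_le_self Real.pi_nonneg)]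
  refine ⟨hL1.toLp, funext fun k => ?_⟩
  have hexp (θ : ℝ) : fourier (-k) (θ : AddCircle (2 * π)) =
      Complex.exp (-(Complex.I * (k : ℂ) * (θ : ℂ))) := by
    have hpi : (π : ℂ) ≠ 0 := Complex.ofReal_ne_zero.2 Real.pi_ne_zero
    rw [fourier_coe_apply]
    congr 1
    push_cast
    field_simp
  calc fourierCoeff hL1.toLp k = fourierCoeff (liftIoc (2 * π) (-π) fun θ => f θ a b) k := by
        rw [fourierCoeff_congr_ae hL1.coeFn_toLp]
    _ = (1 / (2 * π)) • ∫ θ in -π..π, fourier (-k) (θ : AddCircle (2 * π)) • f θ a b := by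
        rw [fourierCoeff_liftIoc_eq, fourierCoeffOn_eq_integral]
        simp only [fourier_coe_apply]
        rw [hend, hlength]
    _ = fCoeff f k a b := by
        rw [one_div, Complex.real_smul, Complex.ofReal_inv]
        simp only [hexp, fCoeff, of_apply, smul_eq_mul, mul_comm]

/-- Reindexing that groups the entries of a block matrix by block and intra-block position, so
that each group is a scalar Toeplitz matrix. -/
def toeplitzBlockEquiv {I : Type*} (β : I → Type*) (σ : Type*) :
    (Σ x : I × σ, β x.1) ≃ Σ i, β i × σ where
  toFun x := ⟨x.1.1, x.2, x.1.2⟩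
  invFun y := ⟨(y.1, y.2.2), y.2.1⟩
  left_inv _ := rfl
  right_inv _ := rfl

variable {ν s t : ℕ} {f : Fin ν → Fin ν → ℝ → Matrix (Fin s) (Fin t) ℂ}

lemma traceNorm_blockMat_sub_blockMatTilde_le (ns : Fin ν → ℕ) :
    traceNorm (blockMat ν s t f ns - blockMatTilde ν s t f ns) ≤
      ∑ x : Fin ν × Fin s, ∑ y : Fin ν × Fin t,
        traceNorm (toeplitzDefect (ns x.1) (ns y.1) fun k => fCoeff (f x.1 y.1) k x.2 y.2) := by
  refine (traceNorm_le_sum_blocks (toeplitzBlockEquiv (fun i => Fin (ns i)) (Fin s))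
    (toeplitzBlockEquiv (fun i => Fin (ns i)) (Fin t)) _).trans_eq ?_
  refine Finset.sum_congr rfl fun x _ => Finset.sum_congr rfl fun y _ => congrArg _ ?_
  ext p q
  simp only [toeplitzBlockEquiv, Equiv.coe_fn_mk, submatrix_apply, Matrix.sub_apply, blockMat,
    blockMatTilde, of_apply, toeplitzDefect_apply]
  split_ifs <;> simp only [sub_self, sub_zero]

lemma isLittleO_traceNorm_blockMat_sub_blockMatTilde {α : Type*} {l : Filter α}
    {nsz : α → Fin ν → ℕ}
    (hf : ∀ i j a b, IntervalIntegrable (fun θ => f i j θ a b) volume (-π) π)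
    (htot : Tendsto (fun n => ∑ i, nsz n i) l atTop) :
    (fun n => traceNorm (blockMat ν s t f (nsz n) - blockMatTilde ν s t f (nsz n))) =o[l]
      fun n => ((∑ i, nsz n i : ℕ) : ℝ) := by
  have hsize (i : Fin ν) : (fun n => (nsz n i : ℝ)) =O[l] fun n => ((∑ i, nsz n i : ℕ) : ℝ) := by
    refine .of_norm_le fun n => ?_
    rw [Real.norm_natCast]
    exact_mod_cast Finset.single_le_sum_of_canonicallyOrdered (Finset.mem_univ i)
  have hblock (x : Fin ν × Fin s) (y : Fin ν × Fin t) :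
      (fun n => traceNorm (toeplitzDefect (nsz n x.1) (nsz n y.1)
        fun k => fCoeff (f x.1 y.1) k x.2 y.2)) =o[l] fun n => ((∑ i, nsz n i : ℕ) : ℝ) := by
    obtain ⟨φ, hφ⟩ := exists_fourierCoeffL1_eq_fCoeff (hf x.1 y.1 x.2 y.2)
    rw [← hφ]
    exact isLittleO_traceNorm_toeplitzDefect (tendsto_natCast_atTop_atTop.comp htot)
      (hsize x.1) (hsize y.1) φ
  have hsum : (fun n => ∑ x : Fin ν × Fin s, ∑ y : Fin ν × Fin t,
      traceNorm (toeplitzDefect (nsz n x.1) (nsz n y.1) fun k => fCoeff (f x.1 y.1) k x.2 y.2))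
        =o[l] fun n => ((∑ i, nsz n i : ℕ) : ℝ) :=
    .fun_sum fun x _ => .fun_sum fun y _ => hblock x y
  refine IsBigO.trans_isLittleO (.of_norm_le fun n => ?_) hsum
  rw [Real.norm_of_nonneg (apply_nonneg _ _)]
  exact traceNorm_blockMat_sub_blockMatTilde_le (nsz n)

lemma card_blockIndex (s : ℕ) (ns : Fin ν → ℕ) :
    Fintype.card (Σ i, Fin (ns i) × Fin s) = (∑ i, ns i) * s := by
  simp only [Fintype.card_sigma, Fintype.card_prod, Fintype.card_fin, Finset.sum_mul]

lemma sum_le_card_blockIndex (hs : 0 < s) (ns : Fin ν → ℕ) :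
    ∑ i, ns i ≤ Fintype.card (Σ i, Fin (ns i) × Fin s) := by
  rw [card_blockIndex]; exact Nat.le_mul_of_pos_right _ hs

lemma isBigO_natCast_of_le {α : Type*} {l : Filter α} {u v : α → ℕ} (c : ℕ)
    (h : ∀ n, u n ≤ v n * c) : (fun n => (u n : ℝ)) =O[l] fun n => (v n : ℝ) := by
  refine .of_bound c (.of_forall fun n => ?_)
  rw [Real.norm_natCast, Real.norm_natCast, mul_comm]
  exact_mod_cast h n

lemma isHermitian_blockMatTilde {ns : Fin ν → ℕ}
    {f : Fin ν → Fin ν → ℝ → Matrix (Fin s) (Fin s) ℂ}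
    (h : (blockMat ν s s f ns).IsHermitian) : (blockMatTilde ν s s f ns).IsHermitian := by
  refine IsHermitian.ext fun P Q => ?_
  have hPQ := h.apply P Q
  simp only [blockMat, of_apply] at hPQ
  simp only [blockMatTilde, of_apply, min_comm (ns Q.1), and_comm (a := (Q.2.1 : ℕ) < _)]
  split_ifs
  exacts [hPQ, star_zero _]

end BlockMatrices

theorem tilde_equivalence_general {α : Type*} {l : Filter α} {ν s t : ℕ} (hs : 0 < s) (ht : 0 < t)
    {f : Fin ν → Fin ν → ℝ → Matrix (Fin s) (Fin t) ℂ}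
    (hf : ∀ i j a b, IntervalIntegrable (fun θ => f i j θ a b) volume (-π) π)
    {nsz : α → Fin ν → ℕ} (htot : Tendsto (fun n => ∑ i, nsz n i) l atTop) :
    (∀ F : ℝ → ℂ, Continuous F → Tendsto F (cocompact ℝ) (𝓝 0) →
      Tendsto (fun n => svAverage F (blockMat ν s t f (nsz n)) -
        svAverage F (blockMatTilde ν s t f (nsz n))) l (𝓝 0)) ∧
    (∀ hst : s = t,
      (∀ n, ((blockMat ν s t f (nsz n)).submatrix id (sigCast ν s t (nsz n) hst)).IsHermitian) →
      ∀ F : ℂ → ℂ, Continuous F → Tendsto F (cocompact ℂ) (𝓝 0) →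
        Tendsto (fun n =>
          eigAverage F ((blockMat ν s t f (nsz n)).submatrix id (sigCast ν s t (nsz n) hst)) -
            eigAverage F ((blockMatTilde ν s t f (nsz n)).submatrix id
              (sigCast ν s t (nsz n) hst))) l (𝓝 0)) := by
  have hdiff := isLittleO_traceNorm_blockMat_sub_blockMatTilde hf htot
  refine ⟨fun F hF hF0 => ?_, ?_⟩
  · have hmin (n) := le_min (sum_le_card_blockIndex hs (nsz n)) (sum_le_card_blockIndex ht (nsz n))
    refine tendsto_svAverage_sub (isBigO_natCast_of_le s fun n => ?_)
      (hdiff.trans_isBigO (isBigO_natCast_of_le 1 fun n => ?_)) hF hF0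
    · exact (card_blockIndex s (nsz n)).trans_le (Nat.mul_le_mul_right s (hmin n))
    · rw [mul_one]
      exact hmin n
  · rintro rfl hA F hF hF0
    refine tendsto_eigAverage_sub hA (fun n => isHermitian_blockMatTilde (hA n))
      (hdiff.trans_isBigO (isBigO_natCast_of_le 1 fun n => ?_)) hF hF0
    rw [mul_one]
    exact sum_le_card_blockIndex hs (nsz n)

/-- under the standard assumptions on the block sizes
(`n_i/n → c_i ∈ (0,1)`, `c_1 + ⋯ + c_ν = 1`, `n → ∞`), the sequences `{A_n}_n` and
`{Ã_n}_n` have the same singular value symbols, and — when all the matrices involved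
are Hermitian — the same eigenvalue symbols. -/
theorem tilde_equivalence
    (ν s t : ℕ) (hν : 2 ≤ ν) (hs : 0 < s) (ht : 0 < t)
    (f : Fin ν → Fin ν → ℝ → Matrix (Fin s) (Fin t) ℂ)
    (hf : ∀ i j a b, IntervalIntegrable (fun θ => f i j θ a b) volume (-π) π)
    (nsz : ℕ → Fin ν → ℕ) (c : Fin ν → ℝ)
    (hc : ∀ i, c i ∈ Set.Ioo (0 : ℝ) 1) (hcsum : ∑ i, c i = 1)
    (htot : Tendsto (fun n => ∑ i, nsz n i) atTop atTop)
    (hratio : ∀ i, Tendsto (fun n => (nsz n i : ℝ) / ((∑ j, nsz n j : ℕ) : ℝ))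
      atTop (𝓝 (c i))) :
    (∀ (l s' t' : ℕ) (Ω : Set (Fin l → ℝ)), MeasurableSet Ω →
      0 < volume Ω → volume Ω < ⊤ →
      ∀ G : (Fin l → ℝ) → Matrix (Fin s') (Fin t') ℂ,
        (∀ a b, Measurable fun θ => G θ a b) →
        (DistributedSV Ω G (fun n => blockMat ν s t f (nsz n)) ↔
          DistributedSV Ω G (fun n => blockMatTilde ν s t f (nsz n)))) ∧
    (∀ hst : s = t,
      (∀ n, ((blockMat ν s t f (nsz n)).submatrix id
        (sigCast ν s t (nsz n) hst)).IsHermitian) →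
      (∀ n, ((blockMatTilde ν s t f (nsz n)).submatrix id
        (sigCast ν s t (nsz n) hst)).IsHermitian) →
      ∀ (l s' : ℕ) (Ω : Set (Fin l → ℝ)), MeasurableSet Ω →
        0 < volume Ω → volume Ω < ⊤ →
        ∀ G : (Fin l → ℝ) → Matrix (Fin s') (Fin s') ℂ,
          (∀ a b, Measurable fun θ => G θ a b) →
          (DistributedEig Ω G (fun n => (blockMat ν s t f (nsz n)).submatrix id
              (sigCast ν s t (nsz n) hst)) ↔
            DistributedEig Ω G (fun n => (blockMatTilde ν s t f (nsz n)).submatrix id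
              (sigCast ν s t (nsz n) hst)))) := by
  obtain ⟨hsv, heig⟩ := tilde_equivalence_general hs ht hf htot
  exact ⟨fun _ _ _ _ _ _ _ _ _ => distributedSV_congr hsv,
    fun hst hA _ _ _ _ _ _ _ _ _ => distributedEig_congr (heig hst hA)⟩

end
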